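/- Let p = 7, let k ≥ 2 and let 0 ≤ a, b ≤ 6 be integers. If either (a = 1 and b + k ≡ 5 (mod 6)) or (a = 4 and b + k ≡ 2 (mod 6)), then for all integers n ≥ 0 one has τ(n) ≡ c_{k,a,b,n} (mod 7), i.e. the n-th Fourier coefficient of Δ is congruent modulo 7 to the n-th Fourier coefficient of the Eisenstein series E_{k,ω_7^a,ω_7^b}. -/

import Mathlib

noncomputable section

/-- The Ramanujan tau function `τ(n)`: the `n`-th coefficient of the `q`-expansion
`q ∏_{m ≥ 1} (1 - q^m)²⁴` of `Δ` (the product may be truncated at `m = n` without changing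
the `n`-th coefficient). -/
def ramanujanTau (n : ℕ) : ℤ :=
  (Polynomial.X * ∏ m ∈ Finset.Icc 1 n, (1 - Polynomial.X ^ m) ^ 24 : Polynomial ℤ).coeff n

/-- The `n`-th Fourier coefficient `c_{k,a,b,n} = ∑_{d ∣ n} ω_p^a(n/d) ω_p^b(d) d^{k-1}` of the
Eisenstein series `E_{k, ω_p^a, ω_p^b}`, where `ω : ℤ → ℤ_[p]` is the Teichmüller character
mod `p`.  (For `n = 0` the sum is empty, giving constant term `0`, as is the case whenever
the first character is nontrivial.) -/
def eisCoeff (p : ℕ) [Fact p.Prime] (ω : ℤ → ℤ_[p]) (k a b : ℕ) (n : ℕ) : ℤ_[p] :=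
  ∑ d ∈ n.divisors, ω ((n / d : ℕ) : ℤ) ^ a * ω (d : ℤ) ^ b * (d : ℤ_[p]) ^ (k - 1)

end

instance : Fact (Nat.Prime 7) := ⟨by norm_num⟩

/-!
The derivatives of `E₄` and `E₆` are not modular, but the Rankin–Cohen bracket
`4 E₄ D(E₆) - 6 E₆ D(E₄)` is: it is a cusp form of weight 12, hence a multiple of `Δ`. Writing
`S_j = ∑ σ_j(n) q ^ n` and `θ = q d/dq`, this reads
`12 ∑ τ(n) q ^ n = 5 (1 - 504 S₅) θ S₃ + 7 (1 + 240 S₃) θ S₅`, an identity of integral power series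
since `S_j` and `τ` are integral. As `7 ∣ 504` it gives `τ(n) ≡ n σ₃(n) (mod 7)`. Finally
`n σ₃(n)` is the sum of `(n/d) d⁴`, or equally of `(n/d)⁴ d`, over the divisors `d` of `n`, and by
Fermat's little theorem the Eisenstein coefficient reduces to one of these two sums.
-/

open UpperHalfPlane hiding I
open Complex (I)
open Filter Topology Function ModularForm EisensteinSeries Derivative
open scoped Manifold MatrixGroups Nat PowerSeries

local notation "𝕢" => Periodic.qParam

section TaylorCoefficients

lemma iteratedDeriv_tendstoLocallyUniformlyOn {ι E : Type*} [NormedAddCommGroup E]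
    [NormedSpace ℂ E] [CompleteSpace E] {l : Filter ι} {F : ι → ℂ → E} {f : ℂ → E} {U : Set ℂ}
    (hf : TendstoLocallyUniformlyOn F f l U) (hF : ∀ᶠ i in l, DifferentiableOn ℂ (F i) U)
    (hU : IsOpen U) (n : ℕ) :
    TendstoLocallyUniformlyOn (fun i ↦ iteratedDeriv n (F i)) (iteratedDeriv n f) l U := by
  induction n generalizing F f with
  | zero => simpa only [iteratedDeriv_zero] using hf
  | succ n ih =>
    simpa only [iteratedDeriv_succ', comp_def] using
      ih (hf.deriv hF hU) (hF.mono fun _ hi ↦ hi.deriv hU)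

lemma iteratedDeriv_polynomial_eval_zero {𝕜 : Type*} [NontriviallyNormedField 𝕜]
    (P : Polynomial 𝕜) (n : ℕ) :
    iteratedDeriv n (fun z ↦ P.eval z) 0 = n ! * P.coeff n := by
  have h : Semiconj (fun (Q : Polynomial 𝕜) z ↦ Q.eval z) Polynomial.derivative deriv :=
    fun Q ↦ by ext; simp
  have hP := congrFun ((h.iterate_right n).eq P) 0
  rw [iteratedDeriv_eq_iterate, ← hP, ← Polynomial.coeff_zero_eq_eval_zero,
    Polynomial.coeff_iterate_derivative, zero_add, Nat.descFactorial_self, nsmul_eq_mul]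

lemma iteratedDeriv_zero_eq_of_tendstoLocallyUniformlyOn {ι : Type*} {l : Filter ι} [l.NeBot]
    {P : ι → Polynomial ℂ} {f : ℂ → ℂ} {U : Set ℂ} {n : ℕ} {c : ℂ}
    (hf : TendstoLocallyUniformlyOn (fun i z ↦ (P i).eval z) f l U) (hU : IsOpen U)
    (h0 : 0 ∈ U) (hc : ∀ᶠ i in l, (P i).coeff n = c) :
    iteratedDeriv n f 0 = n ! * c := by
  have hlim := (iteratedDeriv_tendstoLocallyUniformlyOn hf
    (.of_forall fun i ↦ (P i).differentiable.differentiableOn) hU n).tendsto_at h0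
  refine tendsto_nhds_unique hlim (tendsto_const_nhds.congr' ?_)
  filter_upwards [hc] with i hi
  rw [iteratedDeriv_polynomial_eval_zero, hi]

lemma tendstoLocallyUniformlyOn_pow {X ι : Type*} [TopologicalSpace X] {l : Filter ι}
    {F : ι → X → ℂ} {f : X → ℂ} {s : Set X} (hF : TendstoLocallyUniformlyOn F f l s)
    (hf : ContinuousOn f s) (r : ℕ) :
    TendstoLocallyUniformlyOn (fun i x ↦ F i x ^ r) (fun x ↦ f x ^ r) l s := by
  induction r with
  | zero =>
    simpa only [pow_zero] using
      (tendsto_const_nhds.tendstoUniformlyOn_const s).tendstoLocallyUniformlyOn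
  | succ r ih =>
    simp only [pow_succ]
    exact ih.mul₀ hF (hf.pow r) hf

end TaylorCoefficients

section Discriminant

/-- The truncation `X ∏_{1 ≤ m ≤ N} (1 - X ^ m) ^ 24` of the product defining `Δ`; it is a
polynomial, and its `n`-th coefficient is `τ(n)` as soon as `n ≤ N`. -/
noncomputable def discriminantTrunc (R : Type*) [CommRing R] (N : ℕ) : Polynomial R :=
  Polynomial.X * ∏ m ∈ Finset.Icc 1 N, (1 - Polynomial.X ^ m) ^ 24

lemma coeff_mul_one_sub_X_pow_pow {R : Type*} [CommRing R] (P : Polynomial R) {m n : ℕ}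
    (hnm : n < m) (r : ℕ) : (P * (1 - Polynomial.X ^ m) ^ r).coeff n = P.coeff n := by
  have hdvd : (Polynomial.X ^ m : Polynomial R) ∣ P * (1 - Polynomial.X ^ m) ^ r - P := by
    have h : 1 - Polynomial.X ^ m - 1 ∣ (1 - Polynomial.X ^ m : Polynomial R) ^ r - 1 := by
      simpa only [one_pow] using sub_dvd_pow_sub_pow (1 - Polynomial.X ^ m : Polynomial R) 1 r
    rw [sub_sub_cancel_left, neg_dvd] at h
    simpa only [mul_sub, mul_one] using h.mul_left P
  simpa only [Polynomial.coeff_sub, sub_eq_zero] using Polynomial.X_pow_dvd_iff.mp hdvd n hnm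

lemma coeff_discriminantTrunc (R : Type*) [CommRing R] {n N : ℕ} (h : n ≤ N) :
    (discriminantTrunc R N).coeff n = ramanujanTau n := by
  induction N, h using Nat.le_induction with
  | base =>
    have hmap : (discriminantTrunc ℤ n).map (Int.castRingHom R) = discriminantTrunc R n := by
      simp [discriminantTrunc, Polynomial.map_prod]
    rw [← hmap, Polynomial.coeff_map, discriminantTrunc, ramanujanTau, eq_intCast]
  | succ N hN ih =>
    rw [← ih, discriminantTrunc, Finset.prod_Icc_succ_top (by omega), ← mul_assoc,
      coeff_mul_one_sub_X_pow_pow _ (by omega), discriminantTrunc]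

lemma tendstoLocallyUniformlyOn_discriminantTrunc :
    TendstoLocallyUniformlyOn (fun N z ↦ (discriminantTrunc ℂ N).eval z)
      (fun q ↦ q * ∏' i, (1 - q ^ (i + 1)) ^ 24) atTop (Metric.ball 0 1) := by
  have hcont : ContinuousOn (fun q : ℂ ↦ ∏' i, (1 - q ^ (i + 1))) (Metric.ball 0 1) :=
    differentiableOn_tprod_one_sub_pow.continuousOn
  have hprod : TendstoLocallyUniformlyOn (fun N (z : ℂ) ↦ ∏ i ∈ Finset.range N, (1 - z ^ (i + 1)))
      (fun q ↦ ∏' i, (1 - q ^ (i + 1))) atTop (Metric.ball 0 1) :=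
    multipliableLocallyUniformlyOn_one_sub_pow.hasProdLocallyUniformlyOn
      |>.tendstoLocallyUniformlyOn_finsetRange
  have hid : TendstoLocallyUniformlyOn (fun (_ : ℕ) (z : ℂ) ↦ z) id atTop (Metric.ball 0 1) :=
    fun u hu _ _ ↦ ⟨Set.univ, univ_mem, .of_forall fun _ _ _ ↦ refl_mem_uniformity hu⟩
  refine ((hid.mul₀ (tendstoLocallyUniformlyOn_pow hprod hcont 24) continuousOn_id
    (hcont.pow 24)).congr fun N z _ ↦ ?_).congr_right fun z hz ↦ ?_
  · have hshift : ∏ i ∈ Finset.range N, (1 - z ^ (i + 1)) = ∏ i ∈ Finset.Icc 1 N, (1 - z ^ i) := by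
      rw [Finset.range_eq_Ico, Finset.prod_Ico_add' (fun i ↦ 1 - z ^ i) 0 N 1, zero_add,
        ← Finset.Ico_add_one_right_eq_Icc]
    simp only [Pi.mul_apply, discriminantTrunc, Polynomial.eval_mul, Polynomial.eval_X,
      Polynomial.eval_prod, Polynomial.eval_pow, Polynomial.eval_sub, Polynomial.eval_one,
      Finset.prod_pow, hshift]
  · simp only [Pi.mul_apply, id_eq, (multipliable_one_sub_pow (by simpa using hz)).tprod_pow 24]

lemma coeff_qExpansion_discriminant (n : ℕ) :
    (qExpansion 1 ModularForm.discriminant).coeff n = ramanujanTau n := by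
  have hcusp : cuspFunction 1 ModularForm.discriminant =ᶠ[𝓝 0]
      fun q ↦ q * ∏' i, (1 - q ^ (i + 1)) ^ 24 :=
    discriminant_cuspFunction_eqOn.eventuallyEq_of_mem (Metric.ball_mem_nhds 0 one_pos)
  have htaylor := iteratedDeriv_zero_eq_of_tendstoLocallyUniformlyOn
    tendstoLocallyUniformlyOn_discriminantTrunc Metric.isOpen_ball
    (Metric.mem_ball_self one_pos)
    ((eventually_ge_atTop n).mono fun _ ↦ coeff_discriminantTrunc ℂ)
  rw [qExpansion_coeff, hcusp.iteratedDeriv_eq, htaylor,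
    inv_mul_cancel_left₀ (mod_cast n.factorial_ne_zero)]

end Discriminant

section QDerivative

/-- Ramanujan's operator `θ = q d/dq` on formal power series. -/
noncomputable def theta (R : Type*) [CommRing R] : Derivation R R⟦X⟧ R⟦X⟧ :=
  (PowerSeries.X : R⟦X⟧) • d⁄dX R

lemma coeff_theta {R : Type*} [CommRing R] (F : R⟦X⟧) (n : ℕ) :
    (theta R F).coeff n = n * F.coeff n := by
  cases n <;> simp [theta, PowerSeries.coeff_succ_X_mul, PowerSeries.coeff_derivative, mul_comm]

lemma constantCoeff_theta {R : Type*} [CommRing R] (F : R⟦X⟧) :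
    (theta R F).constantCoeff = 0 := by
  rw [← PowerSeries.coeff_zero_eq_constantCoeff_apply, coeff_theta, Nat.cast_zero, zero_mul]

lemma map_theta {R S : Type*} [CommRing R] [CommRing S] (g : R →+* S) (F : R⟦X⟧) :
    PowerSeries.map g (theta R F) = theta S (PowerSeries.map g F) := by
  ext n
  simp [coeff_theta]

lemma qParam_periodic (h : ℝ) : Periodic (𝕢 h) h := fun w ↦ by
  rcases eq_or_ne h 0 with rfl | hh
  · simp
  · rw [Periodic.qParam, mul_add, add_div, mul_div_cancel_right₀ _ (mod_cast hh)]
    exact Complex.exp_periodic _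

lemma periodic_comp_ofComplex_of_eq_comp_qParam {α : Type*} {h : ℝ} {f : ℍ → α} {F : ℂ → α}
    (hf : ∀ z : ℍ, f z = F (𝕢 h z)) : Periodic (f ∘ ofComplex) h := by
  intro w
  by_cases! hw : 0 < w.im
  · have hw' : 0 < (w + h).im := by simpa using hw
    simp only [comp_apply, ofComplex_apply_of_im_pos hw, ofComplex_apply_of_im_pos hw', hf,
      qParam_periodic h w]
  · have hw' : (w + h).im ≤ 0 := by simpa using hw
    simp only [comp_apply, ofComplex_apply_of_im_nonpos hw, ofComplex_apply_of_im_nonpos hw']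

lemma qExpansion_eq_of_hasSum {h : ℝ} (hh : 0 < h) {f : ℍ → ℂ} {F : ℂ⟦X⟧}
    (han : AnalyticAt ℂ (cuspFunction h f) 0)
    (hf : ∀ z : ℍ, HasSum (fun m ↦ F.coeff m • 𝕢 h z ^ m) (f z)) :
    qExpansion h f = F := by
  have hc := (hasFPowerSeriesOnBall_cuspFunction hh han hf).hasFPowerSeriesAt
  have h' := hc.eq_formalMultilinearSeries han.hasFPowerSeriesAt
  ext m
  simpa [qExpansion_coeff, div_eq_inv_mul, FormalMultilinearSeries.coeff_ofScalars] using
    (congr_arg (FormalMultilinearSeries.coeff · m) h').symm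

variable {h : ℝ} {f : ℍ → ℂ}

lemma normalizedDerivOfComplex_eq_qParam_mul_deriv (hh : 0 < h)
    (hfper : Periodic (f ∘ ofComplex) h) (hf : MDiff f) (hfbdd : IsBoundedAtImInfty f) (z : ℍ) :
    D f z = (h : ℂ)⁻¹ * (𝕢 h z * deriv (cuspFunction h f) (𝕢 h z)) := by
  have hcusp : DifferentiableAt ℂ (cuspFunction h f) (𝕢 h z) :=
    differentiableAt_cuspFunction hh hfper hf hfbdd (Periodic.norm_qParam_lt_one hh z.im_pos)
  have heq : f ∘ ofComplex =ᶠ[𝓝 (z : ℂ)] cuspFunction h f ∘ 𝕢 h :=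
    .of_forall fun w ↦ (Periodic.eq_cuspFunction hh.ne' hfper w).symm
  have hderiv : deriv (𝕢 h) (z : ℂ) = 2 * Real.pi * I / h * 𝕢 h z := by
    rw [← logDeriv_qParam h z, logDeriv_apply, div_mul_cancel₀ _ (Periodic.qParam_ne_zero _)]
  rw [normalizedDerivOfComplex, heq.deriv_eq,
    deriv_comp _ hcusp Periodic.differentiable_qParam.differentiableAt, hderiv]
  field [Complex.two_pi_I_ne_zero]

lemma periodic_normalizedDerivOfComplex_comp_ofComplex (hh : 0 < h)
    (hfper : Periodic (f ∘ ofComplex) h) (hf : MDiff f) (hfbdd : IsBoundedAtImInfty f) :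
    Periodic (D f ∘ ofComplex) h :=
  periodic_comp_ofComplex_of_eq_comp_qParam
    (F := fun q ↦ (h : ℂ)⁻¹ * (q * deriv (cuspFunction h f) q))
    (normalizedDerivOfComplex_eq_qParam_mul_deriv hh hfper hf hfbdd)

lemma isZeroAtImInfty_normalizedDerivOfComplex (hh : 0 < h)
    (hfper : Periodic (f ∘ ofComplex) h) (hf : MDiff f) (hfbdd : IsBoundedAtImInfty f) :
    IsZeroAtImInfty (D f) := by
  have hderiv := (analyticAt_cuspFunction_zero hh hfper hf hfbdd).deriv.continuousAt
  have hlim : Tendsto (fun q : ℂ ↦ (h : ℂ)⁻¹ * (q * deriv (cuspFunction h f) q)) (𝓝 0) (𝓝 0) := by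
    simpa using (tendsto_id.mul hderiv.tendsto).const_mul (h : ℂ)⁻¹
  exact (hlim.comp (qParam_tendsto_atImInfty hh)).congr fun z ↦
    (normalizedDerivOfComplex_eq_qParam_mul_deriv hh hfper hf hfbdd z).symm

lemma analyticAt_cuspFunction_normalizedDerivOfComplex (hh : 0 < h)
    (hfper : Periodic (f ∘ ofComplex) h) (hf : MDiff f) (hfbdd : IsBoundedAtImInfty f) :
    AnalyticAt ℂ (cuspFunction h (D f)) 0 :=
  analyticAt_cuspFunction_zero hh
    (periodic_normalizedDerivOfComplex_comp_ofComplex hh hfper hf hfbdd)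
    (normalizedDerivOfComplex_mdifferentiable hf)
    (isZeroAtImInfty_normalizedDerivOfComplex hh hfper hf hfbdd).isBoundedAtImInfty

lemma hasSum_deriv_cuspFunction (hh : 0 < h) (hfper : Periodic (f ∘ ofComplex) h) (hf : MDiff f)
    (hfbdd : IsBoundedAtImInfty f) {q : ℂ} (hq : ‖q‖ < 1) :
    HasSum (fun m ↦ (d⁄dX ℂ (qExpansion h f)).coeff m • q ^ m) (deriv (cuspFunction h f) q) := by
  have hdiff : DifferentiableOn ℂ (deriv (cuspFunction h f)) (Metric.ball 0 1) :=
    (differentiableOn_cuspFunction_ball hh hfper hf hfbdd).deriv Metric.isOpen_ball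
  refine (Complex.hasSum_taylorSeries_on_ball hdiff (by simpa using hq)).congr_fun fun m ↦ ?_
  rw [PowerSeries.coeff_derivative, qExpansion_coeff, ← iteratedDeriv_succ', Nat.factorial_succ]
  have hm : (m : ℂ) + 1 ≠ 0 := mod_cast m.succ_ne_zero
  simp only [smul_eq_mul, sub_zero, Nat.cast_mul, Nat.cast_succ]
  field

lemma hasSum_coeff_theta {F : ℂ⟦X⟧} {q s : ℂ}
    (hF : HasSum (fun m ↦ (d⁄dX ℂ F).coeff m • q ^ m) s) :
    HasSum (fun m ↦ (theta ℂ F).coeff m • q ^ m) (q * s) := by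
  have h0 : (theta ℂ F).coeff 0 = 0 := by
    rw [PowerSeries.coeff_zero_eq_constantCoeff_apply, constantCoeff_theta]
  rw [← hasSum_nat_add_iff' 1, Finset.sum_range_one, h0, zero_smul, sub_zero]
  refine (hF.mul_left q).congr_fun fun m ↦ ?_
  rw [theta, Derivation.smul_apply, smul_eq_mul, smul_eq_mul,
    PowerSeries.coeff_succ_X_mul, smul_eq_mul, pow_succ', mul_left_comm]

lemma qExpansion_normalizedDerivOfComplex (hh : 0 < h) (hfper : Periodic (f ∘ ofComplex) h)
    (hf : MDiff f) (hfbdd : IsBoundedAtImInfty f) :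
    qExpansion h (D f) = (h : ℂ)⁻¹ • theta ℂ (qExpansion h f) := by
  refine qExpansion_eq_of_hasSum hh
    (analyticAt_cuspFunction_normalizedDerivOfComplex hh hfper hf hfbdd) fun z ↦ ?_
  rw [normalizedDerivOfComplex_eq_qParam_mul_deriv hh hfper hf hfbdd z]
  simpa only [PowerSeries.coeff_smul, smul_eq_mul, mul_assoc] using (hasSum_coeff_theta
    (hasSum_deriv_cuspFunction hh hfper hf hfbdd
      (Periodic.norm_qParam_lt_one hh z.im_pos))).mul_left (h : ℂ)⁻¹

end QDerivative

section RankinCohen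

/-- The first Rankin–Cohen bracket `[f, g] = k f D(g) - l g D(f)` of functions `f` and `g` on the
upper half-plane, regarded as being of weights `k` and `l`. -/
noncomputable def rankinCohenBracket (k l : ℤ) (f g : ℍ → ℂ) : ℍ → ℂ :=
  (k : ℂ) • (f * D g) - (l : ℂ) • (g * D f)

variable {k l : ℤ} {f g : ℍ → ℂ}

-- The multiples of `E₂` by which the Serre derivatives differ from `D` cancel in the bracket.
lemma rankinCohenBracket_eq_serreDerivative :
    rankinCohenBracket k l f g =
      (k : ℂ) • (f * serreDerivative l g) - (l : ℂ) • (g * serreDerivative k f) := by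
  ext z
  simp only [rankinCohenBracket, serreDerivative_apply, Pi.sub_apply, Pi.smul_apply, Pi.mul_apply,
    smul_eq_mul]
  ring

lemma rankinCohenBracket_slash {γ : SL(2, ℤ)} (hf : MDiff f) (hg : MDiff g)
    (hfγ : f ∣[k] γ = f) (hgγ : g ∣[l] γ = g) :
    rankinCohenBracket k l f g ∣[k + l + 2] γ = rankinCohenBracket k l f g := by
  have hfg : (f * serreDerivative l g) ∣[k + l + 2] γ = f * serreDerivative l g := by
    rw [add_assoc, ModularForm.mul_slash_SL2, hfγ, serreDerivative_slash_invariant hg hgγ]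
  have hgf : (g * serreDerivative k f) ∣[k + l + 2] γ = g * serreDerivative k f := by
    rw [add_comm k, add_assoc, ModularForm.mul_slash_SL2, hgγ,
      serreDerivative_slash_invariant hf hfγ]
  rw [rankinCohenBracket_eq_serreDerivative, sub_eq_add_neg, SlashAction.add_slash,
    SlashAction.neg_slash, ModularForm.SL_smul_slash, ModularForm.SL_smul_slash, hfg, hgf]

lemma mdifferentiable_rankinCohenBracket (hf : MDiff f) (hg : MDiff g) :
    MDiff (rankinCohenBracket k l f g) :=
  ((hf.mul (normalizedDerivOfComplex_mdifferentiable hg)).const_smul _).sub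
    ((hg.mul (normalizedDerivOfComplex_mdifferentiable hf)).const_smul _)

lemma isZeroAtImInfty_rankinCohenBracket (hf : IsBoundedAtImInfty f) (hg : IsBoundedAtImInfty g)
    (hDf : IsZeroAtImInfty (D f)) (hDg : IsZeroAtImInfty (D g)) :
    IsZeroAtImInfty (rankinCohenBracket k l f g) := by
  have hfDg : Tendsto (f * D g) atImInfty (𝓝 0) :=
    isBoundedUnder_le_mul_tendsto_zero hf.isBoundedUnder_le hDg
  have hgDf : Tendsto (g * D f) atImInfty (𝓝 0) :=
    isBoundedUnder_le_mul_tendsto_zero hg.isBoundedUnder_le hDf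
  have hlim := (hfDg.const_smul (k : ℂ)).sub (hgDf.const_smul (l : ℂ))
  rwa [smul_zero, smul_zero, sub_zero] at hlim

lemma analyticAt_cuspFunction_mul {h : ℝ} (hf : AnalyticAt ℂ (cuspFunction h f) 0)
    (hg : AnalyticAt ℂ (cuspFunction h g) 0) : AnalyticAt ℂ (cuspFunction h (f * g)) 0 := by
  rw [cuspFunction_mul hf.continuousAt hg.continuousAt]
  exact hf.mul hg

lemma analyticAt_cuspFunction_smul {h : ℝ} (hf : AnalyticAt ℂ (cuspFunction h f) 0) (c : ℂ) :
    AnalyticAt ℂ (cuspFunction h (c • f)) 0 := by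
  rw [cuspFunction_smul hf.continuousAt]
  exact analyticAt_const.smul hf

lemma qExpansion_rankinCohenBracket {h : ℝ} (hh : 0 < h)
    (hfper : Periodic (f ∘ ofComplex) h) (hf : MDiff f) (hfbdd : IsBoundedAtImInfty f)
    (hgper : Periodic (g ∘ ofComplex) h) (hg : MDiff g) (hgbdd : IsBoundedAtImInfty g) :
    qExpansion h (rankinCohenBracket k l f g) = (h : ℂ)⁻¹ •
      ((k : ℂ) • (qExpansion h f * theta ℂ (qExpansion h g)) -
        (l : ℂ) • (qExpansion h g * theta ℂ (qExpansion h f))) := by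
  have haf := analyticAt_cuspFunction_zero hh hfper hf hfbdd
  have hag := analyticAt_cuspFunction_zero hh hgper hg hgbdd
  have haDf := analyticAt_cuspFunction_normalizedDerivOfComplex hh hfper hf hfbdd
  have haDg := analyticAt_cuspFunction_normalizedDerivOfComplex hh hgper hg hgbdd
  have hfDg := analyticAt_cuspFunction_mul haf haDg
  have hgDf := analyticAt_cuspFunction_mul hag haDf
  rw [rankinCohenBracket, UpperHalfPlane.qExpansion_sub (analyticAt_cuspFunction_smul hfDg _)
    (analyticAt_cuspFunction_smul hgDf _), UpperHalfPlane.qExpansion_smul hfDg,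
    UpperHalfPlane.qExpansion_smul hgDf, UpperHalfPlane.qExpansion_mul haf haDg,
    UpperHalfPlane.qExpansion_mul hag haDf,
    qExpansion_normalizedDerivOfComplex hh hfper hf hfbdd,
    qExpansion_normalizedDerivOfComplex hh hgper hg hgbdd, mul_smul_comm, mul_smul_comm,
    smul_comm (k : ℂ), smul_comm (l : ℂ), smul_sub]

lemma rankinCohenBracket_modularForm_slash (f : ModularForm 𝒮ℒ k) (g : ModularForm 𝒮ℒ l)
    (γ : SL(2, ℤ)) : rankinCohenBracket k l f g ∣[k + l + 2] γ = rankinCohenBracket k l f g :=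
  rankinCohenBracket_slash (ModularFormClass.holo f) (ModularFormClass.holo g)
    (SlashInvariantFormClass.slash_action_eq f _ ⟨γ, rfl⟩)
    (SlashInvariantFormClass.slash_action_eq g _ ⟨γ, rfl⟩)

lemma isZeroAtImInfty_normalizedDerivOfComplex_modularForm (f : ModularForm 𝒮ℒ k) :
    IsZeroAtImInfty (D f) :=
  isZeroAtImInfty_normalizedDerivOfComplex one_pos
    (SlashInvariantFormClass.periodic_comp_ofComplex f one_mem_strictPeriods_SL)
    (ModularFormClass.holo f) (ModularFormClass.bdd_at_infty f)

/-- The first Rankin–Cohen bracket of level one modular forms of weights `k` and `l`, as a cusp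
form of weight `k + l + 2`. -/
noncomputable def rankinCohenCuspForm (f : ModularForm 𝒮ℒ k) (g : ModularForm 𝒮ℒ l) :
    CuspForm 𝒮ℒ (k + l + 2) where
  toFun := rankinCohenBracket k l f g
  slash_action_eq' A hA := by
    obtain ⟨γ, rfl⟩ := hA
    exact rankinCohenBracket_modularForm_slash f g γ
  holo' := mdifferentiable_rankinCohenBracket (ModularFormClass.holo f) (ModularFormClass.holo g)
  zero_at_cusps' hc := by
    rw [Subgroup.IsArithmetic.isCusp_iff_isCusp_SL2Z] at hc
    rw [OnePoint.isZeroAt_iff_forall_SL2Z hc]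
    intro γ _
    rw [rankinCohenBracket_modularForm_slash]
    exact isZeroAtImInfty_rankinCohenBracket (ModularFormClass.bdd_at_infty f)
      (ModularFormClass.bdd_at_infty g) (isZeroAtImInfty_normalizedDerivOfComplex_modularForm f)
      (isZeroAtImInfty_normalizedDerivOfComplex_modularForm g)

lemma qExpansion_rankinCohenCuspForm (f : ModularForm 𝒮ℒ k) (g : ModularForm 𝒮ℒ l) :
    qExpansion 1 (rankinCohenCuspForm f g) =
      (k : ℂ) • (qExpansion 1 f * theta ℂ (qExpansion 1 g)) -
        (l : ℂ) • (qExpansion 1 g * theta ℂ (qExpansion 1 f)) := by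
  have h := qExpansion_rankinCohenBracket (k := k) (l := l) one_pos
    (SlashInvariantFormClass.periodic_comp_ofComplex f one_mem_strictPeriods_SL)
    (ModularFormClass.holo f) (ModularFormClass.bdd_at_infty f)
    (SlashInvariantFormClass.periodic_comp_ofComplex g one_mem_strictPeriods_SL)
    (ModularFormClass.holo g) (ModularFormClass.bdd_at_infty g)
  rwa [Complex.ofReal_one, inv_one, one_smul] at h

end RankinCohen

section RamanujanIdentity

open ArithmeticFunction (sigma)

/-- The generating series `∑ σ_j(n) X ^ n` of the divisor sums, with vanishing constant term. -/
noncomputable def sigmaSeries (R : Type*) [CommRing R] (j : ℕ) : R⟦X⟧ :=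
  PowerSeries.mk fun n ↦ (sigma j n : R)

/-- The generating series `∑ τ(n) X ^ n` of Ramanujan's tau function, i.e. the `q`-expansion
of `Δ`. -/
noncomputable def tauSeries (R : Type*) [CommRing R] : R⟦X⟧ :=
  PowerSeries.mk fun n ↦ (ramanujanTau n : R)

lemma constantCoeff_sigmaSeries (R : Type*) [CommRing R] (j : ℕ) :
    (sigmaSeries R j).constantCoeff = 0 := by
  simp [sigmaSeries]

lemma coeff_one_sigmaSeries (R : Type*) [CommRing R] (j : ℕ) :
    (sigmaSeries R j).coeff 1 = 1 := by
  simp [sigmaSeries]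

lemma map_sigmaSeries {R S : Type*} [CommRing R] [CommRing S] (g : R →+* S) (j : ℕ) :
    PowerSeries.map g (sigmaSeries R j) = sigmaSeries S j := by
  ext n
  simp [sigmaSeries]

lemma map_tauSeries {R S : Type*} [CommRing R] [CommRing S] (g : R →+* S) :
    PowerSeries.map g (tauSeries R) = tauSeries S := by
  ext n
  simp [tauSeries]

lemma qExpansion_discriminant : qExpansion 1 ModularForm.discriminant = tauSeries ℂ := by
  ext n
  rw [coeff_qExpansion_discriminant, tauSeries, PowerSeries.coeff_mk]

lemma qExpansion_E {k : ℕ} (hk : 3 ≤ k) (hk2 : Even k) :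
    qExpansion 1 (E hk) = 1 - PowerSeries.C (2 * k / bernoulli k : ℂ) * sigmaSeries ℂ (k - 1) := by
  ext n
  rw [E_qExpansion_coeff hk hk2]
  rcases eq_or_ne n 0 with rfl | hn
  · simp [sigmaSeries]
  · simp [sigmaSeries, PowerSeries.coeff_one, hn, -map_div₀]

lemma qExpansion_E₄ : qExpansion 1 E₄ = 1 + 240 * sigmaSeries ℂ 3 := by
  have hB : bernoulli 4 = -1 / 30 := by decide +kernel
  rw [qExpansion_E _ (by decide), hB, ← map_ofNat PowerSeries.C]
  norm_num

lemma qExpansion_E₆ : qExpansion 1 E₆ = 1 - 504 * sigmaSeries ℂ 5 := by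
  have hB : bernoulli 6 = 1 / 42 := by decide +kernel
  rw [qExpansion_E _ (by decide), hB, ← map_ofNat PowerSeries.C]
  norm_num

lemma coeff_one_tauSeries (R : Type*) [CommRing R] : (tauSeries R).coeff 1 = 1 := by
  simp [tauSeries, ramanujanTau, Polynomial.coeff_zero_eq_eval_zero]

lemma qExpansion_eq_coeff_one_smul_tauSeries (f : CuspForm 𝒮ℒ 12) :
    qExpansion 1 f = (qExpansion 1 f).coeff 1 • tauSeries ℂ := by
  obtain ⟨c, rfl⟩ := CuspForm.exists_smul_discriminant_of_weight_eq_twelve f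
  have h : qExpansion 1 ⇑(c • CuspForm.discriminant : CuspForm 𝒮ℒ 12) = c • tauSeries ℂ := by
    rw [← qExpansion_discriminant, ← CuspForm.coe_discriminant]
    exact ModularForm.qExpansion_smul one_pos one_mem_strictPeriods_SL c CuspForm.discriminant
  rw [h, PowerSeries.coeff_smul, coeff_one_tauSeries, smul_eq_mul, mul_one]

lemma qExpansion_rankinCohenCuspForm_E₄_E₆ :
    qExpansion 1 (rankinCohenCuspForm E₄ E₆) = (-288 : ℂ) •
      (5 * (1 - 504 * sigmaSeries ℂ 5) * theta ℂ (sigmaSeries ℂ 3) +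
        7 * (1 + 240 * sigmaSeries ℂ 3) * theta ℂ (sigmaSeries ℂ 5)) := by
  have h₄ : theta ℂ (1 + 240 * sigmaSeries ℂ 3) = 240 * theta ℂ (sigmaSeries ℂ 3) := by
    simpa using map_nsmul (theta ℂ) 240 (sigmaSeries ℂ 3)
  have h₆ : theta ℂ (1 - 504 * sigmaSeries ℂ 5) = -504 * theta ℂ (sigmaSeries ℂ 5) := by
    simpa using map_nsmul (theta ℂ) 504 (sigmaSeries ℂ 5)
  rw [qExpansion_rankinCohenCuspForm, qExpansion_E₄, qExpansion_E₆, h₄, h₆]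
  simp only [PowerSeries.smul_eq_C_mul]
  push_cast
  simp only [map_ofNat, map_neg]
  ring

lemma twelve_mul_tauSeries_complex :
    12 * tauSeries ℂ = 5 * (1 - 504 * sigmaSeries ℂ 5) * theta ℂ (sigmaSeries ℂ 3) +
      7 * (1 + 240 * sigmaSeries ℂ 3) * theta ℂ (sigmaSeries ℂ 5) := by
  set P := 5 * (1 - 504 * sigmaSeries ℂ 5) * theta ℂ (sigmaSeries ℂ 3) +
    7 * (1 + 240 * sigmaSeries ℂ 3) * theta ℂ (sigmaSeries ℂ 5) with hP
  have hP1 : P.coeff 1 = 12 := by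
    simp only [hP, map_add, map_sub, map_mul, map_ofNat, map_one, PowerSeries.coeff_one_mul,
      constantCoeff_theta, constantCoeff_sigmaSeries, coeff_theta, coeff_one_sigmaSeries]
    norm_num
  have hbracket : (-288 : ℂ) • P = ((-288 : ℂ) • P).coeff 1 • tauSeries ℂ :=
    qExpansion_rankinCohenCuspForm_E₄_E₆ ▸
      qExpansion_eq_coeff_one_smul_tauSeries (rankinCohenCuspForm E₄ E₆)
  rw [PowerSeries.coeff_smul, hP1, smul_assoc] at hbracket
  rw [smul_right_injective _ (by norm_num : (-288 : ℂ) ≠ 0) hbracket, PowerSeries.smul_eq_C_mul,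
    map_ofNat]

lemma twelve_mul_tauSeries (R : Type*) [CommRing R] :
    12 * tauSeries R = 5 * (1 - 504 * sigmaSeries R 5) * theta R (sigmaSeries R 3) +
      7 * (1 + 240 * sigmaSeries R 3) * theta R (sigmaSeries R 5) := by
  have hint : 12 * tauSeries ℤ = 5 * (1 - 504 * sigmaSeries ℤ 5) * theta ℤ (sigmaSeries ℤ 3) +
      7 * (1 + 240 * sigmaSeries ℤ 3) * theta ℤ (sigmaSeries ℤ 5) := by
    apply PowerSeries.map_injective (Int.castRingHom ℂ) Int.cast_injective
    simpa only [map_mul, map_add, map_sub, map_one, map_ofNat, map_theta, map_sigmaSeries,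
      map_tauSeries] using twelve_mul_tauSeries_complex
  simpa only [map_mul, map_add, map_sub, map_one, map_ofNat, map_theta, map_sigmaSeries,
    map_tauSeries] using congrArg (PowerSeries.map (Int.castRingHom R)) hint

lemma tauSeries_eq_theta_sigmaSeries (R : Type*) [CommRing R] [CharP R 7] :
    tauSeries R = theta R (sigmaSeries R 3) := by
  have h7 : (7 : R⟦X⟧) = 0 := by
    rw [← map_ofNat PowerSeries.C 7, CharP.ofNat_eq_zero R 7, map_zero]
  have h12 : (12 : R⟦X⟧) = 5 := by linear_combination h7
  have h504 : (504 : R⟦X⟧) = 0 := by linear_combination 72 * h7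
  have h := twelve_mul_tauSeries R
  rw [h12, h504, h7, zero_mul, zero_mul, zero_mul, sub_zero, mul_one, add_zero] at h
  linear_combination 3 * h + 2 * (theta R (sigmaSeries R 3) - tauSeries R) * h7

end RamanujanIdentity

section EisensteinCoefficients

open ArithmeticFunction (sigma)

lemma natCast_pow_mul_sigma {R : Type*} [CommSemiring R] (i j n : ℕ) :
    (n : R) ^ i * sigma j n = ∑ d ∈ n.divisors, ((n / d : ℕ) : R) ^ i * (d : R) ^ (i + j) := by
  rw [ArithmeticFunction.sigma_apply, Nat.cast_sum, Finset.mul_sum]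
  refine Finset.sum_congr rfl fun d hd ↦ ?_
  have hn : ((n / d : ℕ) : R) * d = n := by
    rw [← Nat.cast_mul, Nat.div_mul_cancel (Nat.dvd_of_mem_divisors hd)]
  rw [Nat.cast_pow, ← hn, mul_pow, mul_assoc, ← pow_add]

lemma sum_divisors_div_pow_mul_pow_comm {R : Type*} [CommSemiring R] (i j n : ℕ) :
    ∑ d ∈ n.divisors, ((n / d : ℕ) : R) ^ i * (d : R) ^ j =
      ∑ d ∈ n.divisors, ((n / d : ℕ) : R) ^ j * (d : R) ^ i := by
  rw [← Nat.sum_div_divisors]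
  refine Finset.sum_congr rfl fun d hd ↦ ?_
  rw [Nat.div_div_self (Nat.dvd_of_mem_divisors hd) (Nat.ne_zero_of_mem_divisors hd), mul_comm]

variable {p : ℕ} [Fact p.Prime]

lemma zmod_pow_eq_pow_of_modEq (x : ZMod p) {m r : ℕ} (hm : m ≠ 0) (hr : r ≠ 0)
    (h : m ≡ r [MOD p - 1]) : x ^ m = x ^ r := by
  rcases eq_or_ne x 0 with rfl | hx
  · rw [zero_pow hm, zero_pow hr]
  · rw [← pow_mod_orderOf, h.of_dvd (ZMod.orderOf_dvd_card_sub_one hx), pow_mod_orderOf]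

lemma toZMod_eisCoeff {ω : ℤ → ℤ_[p]} (hω : ∀ m : ℤ, PadicInt.toZMod (ω m) = m) (k a b n : ℕ) :
    PadicInt.toZMod (eisCoeff p ω k a b n) =
      ∑ d ∈ n.divisors, ((n / d : ℕ) : ZMod p) ^ a * (d : ZMod p) ^ (b + (k - 1)) := by
  simp only [eisCoeff, map_sum, map_mul, map_pow, hω, map_natCast, Int.cast_natCast, mul_assoc,
    pow_add]

lemma toZMod_eisCoeff_of_modEq {ω : ℤ → ℤ_[p]} (hω : ∀ m : ℤ, PadicInt.toZMod (ω m) = m)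
    {k a b i j : ℕ} (hk : 1 ≤ k) (ha : a ≠ 0) (hi : i ≠ 0) (hai : a ≡ i [MOD p - 1])
    (hbk : b + k ≠ 1) (hj : j ≠ 0) (hbkj : b + k ≡ j + 1 [MOD p - 1]) (n : ℕ) :
    PadicInt.toZMod (eisCoeff p ω k a b n) =
      ∑ d ∈ n.divisors, ((n / d : ℕ) : ZMod p) ^ i * (d : ZMod p) ^ j := by
  have hexp : b + (k - 1) ≡ j [MOD p - 1] :=
    Nat.ModEq.add_right_cancel' 1 (by rwa [add_assoc, Nat.sub_add_cancel hk])
  rw [toZMod_eisCoeff hω]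
  refine Finset.sum_congr rfl fun d _ ↦ ?_
  rw [zmod_pow_eq_pow_of_modEq _ ha hi hai, zmod_pow_eq_pow_of_modEq _ (by omega) hj hexp]

lemma ramanujanTau_zmod_seven_eq_mul_sigma (n : ℕ) : (ramanujanTau n : ZMod 7) = n * sigma 3 n := by
  simpa [tauSeries, sigmaSeries, coeff_theta] using
    congrArg (PowerSeries.coeff n) (tauSeries_eq_theta_sigmaSeries (ZMod 7))

lemma ramanujanTau_zmod_seven_eq_sum_divisors (n : ℕ) :
    (ramanujanTau n : ZMod 7) =
      ∑ d ∈ n.divisors, ((n / d : ℕ) : ZMod 7) ^ 1 * (d : ZMod 7) ^ 4 := by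
  rw [ramanujanTau_zmod_seven_eq_mul_sigma, ← natCast_pow_mul_sigma 1 3, pow_one]

end EisensteinCoefficients

theorem tau_congruent_eisenstein_seven_general (ω : ℤ → ℤ_[7])
    (hω : ∀ m : ℤ, PadicInt.toZMod (ω m) = (m : ZMod 7)) (k a b : ℕ) (hk : 1 ≤ k)
    (hab : (a ≡ 1 [MOD 6] ∧ b + k ≡ 5 [MOD 6]) ∨ (a ≡ 4 [MOD 6] ∧ b + k ≡ 2 [MOD 6])) (n : ℕ) :
    (ramanujanTau n : ZMod 7) = PadicInt.toZMod (eisCoeff 7 ω k a b n) := by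
  have ha0 : a ≠ 0 := by unfold Nat.ModEq at hab; omega
  have hbk1 : b + k ≠ 1 := by unfold Nat.ModEq at hab; omega
  rw [ramanujanTau_zmod_seven_eq_sum_divisors]
  rcases hab with ⟨ha, hbk⟩ | ⟨ha, hbk⟩
  · rw [toZMod_eisCoeff_of_modEq hω hk ha0 one_ne_zero ha hbk1 four_ne_zero hbk n]
  · rw [sum_divisors_div_pow_mul_pow_comm,
      toZMod_eisCoeff_of_modEq hω hk ha0 four_ne_zero ha hbk1 one_ne_zero hbk n]

/-- Theorem 3.3 (second half): for `p = 7`, if `a = 1` and `b + k ≡ 5 (mod 6)`, or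
`a = 4` and `b + k ≡ 2 (mod 6)`, then `τ(n) ≡ c_{k,a,b,n} (mod 7)` for all `n ≥ 0`.
Here `ω` is the Teichmüller character mod `7`, characterized by `ω(m) ≡ m (mod 7)` together
with its values being Teichmüller representatives (`ω(m)⁷ = ω(m)`). -/
theorem tau_congruent_eisenstein_seven
    (ω : ℤ → ℤ_[7])
    (hω_cong : ∀ m : ℤ, PadicInt.toZMod (ω m) = (m : ZMod 7))
    (hω_teich : ∀ m : ℤ, ω m ^ 7 = ω m)
    (k a b : ℕ) (hk : 2 ≤ k) (ha : a ≤ 6) (hb : b ≤ 6)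
    (hab : (a = 1 ∧ b + k ≡ 5 [MOD 6]) ∨ (a = 4 ∧ b + k ≡ 2 [MOD 6])) :
    ∀ n : ℕ, ((ramanujanTau n : ℤ) : ZMod 7) = PadicInt.toZMod (eisCoeff 7 ω k a b n) :=
  tau_congruent_eisenstein_seven_general ω hω_cong k a b (one_le_two.trans hk) <|
    hab.imp (And.imp_left fun h : a = 1 ↦ h ▸ rfl) (And.imp_left fun h : a = 4 ↦ h ▸ rfl)
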